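/- (General hyperpfaffian minor summation formula) Let l be even, ln ≤ N, and for 1 ≤ s ≤ r let H(s) be an m-dimensional tensor of size ln×⋯×ln×N, and A an r-dimensional l-block array of size N. Then ∑_{P^(1),…,P^(r) ∈ C([N],ln)} Pf^[l,r](A_{P^(1),…,P^(r)}) ∏_{s=1}^r det^[m] H(s)_{[ln],…,[ln],P^(s)} = Pf^[l,(m-1)r](Q), where the (m−1)r-dimensional l-block array Q of size ln is given by Q(I^(1,1),…,I^(r,m-1)) = ∑_{K^(1),…,K^(r) ∈ C([N],l)} A(K^(1),…,K^(r)) ∏_{s=1}^r det^[m](H(s)_{I^(s,1),…,I^(s,m-1),K^(s)}). -/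

import Mathlib

open scoped Classical
open Finset Equiv

noncomputable section

variable {F : Type*} [Field F] [CharZero F]

/-- The hyperdeterminant `det^[m]` of an `m`-dimensional tensor of size `n`:
`∑_{σ₁,…,σ_{m-1}} sgn(σ₁⋯σ_{m-1}) ∏_i A(i, σ₁ i, …, σ_{m-1} i)`, encoded as a sum over
`m`-tuples of permutations whose `0`-th component is forced to be the identity. -/
def hyperdet (m n : ℕ) (A : (Fin m → Fin n) → F) : F :=
  ∑ σ : Fin m → Equiv.Perm (Fin n),
    if (∀ k : Fin m, k.1 = 0 → σ k = 1) then
      (∏ k, ((Equiv.Perm.sign (σ k) : ℤ) : F)) * ∏ i, A fun k => σ k i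
    else 0

/-- `blk l n j i` is the `i`-th entry of the `j`-th consecutive block of length `l` in `[l*n]`. -/
def blk (l n : ℕ) (j : Fin n) (i : Fin l) : Fin (l * n) :=
  ⟨j.1 * l + i.1, by
    have hi := i.2; have hj := j.2
    calc j.1 * l + i.1 < (j.1 + 1) * l := by rw [Nat.add_mul, Nat.one_mul]; omega
      _ ≤ n * l := Nat.mul_le_mul_right l hj
      _ = l * n := Nat.mul_comm n l⟩

/-- A permutation of `[l*n]` is block-increasing if it is increasing on each of the
`n` consecutive blocks of length `l`. -/
def BlockInc (l n : ℕ) (σ : Equiv.Perm (Fin (l * n))) : Prop :=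
  ∀ j : Fin n, StrictMono fun i : Fin l => σ (blk l n j i)

/-- The `j`-th block of `σ`, as a subset of `[l*n]`. -/
def blkSet (l n : ℕ) (σ : Equiv.Perm (Fin (l * n))) (j : Fin n) : Finset (Fin (l * n)) :=
  Finset.image (fun i => σ (blk l n j i)) Finset.univ

/-- The hyperpfaffian `Pf^[l,m]` of an `m`-dimensional `l`-block array of size `l*n`
(the `m` dimensions are indexed by an arbitrary finite type `ι`). -/
def hyperpf (l n : ℕ) {ι : Type*} [Fintype ι]
    (B : (ι → Finset (Fin (l * n))) → F) : F :=
  (n.factorial : F)⁻¹ *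
    ∑ σ : ι → Equiv.Perm (Fin (l * n)),
      if ∀ s, BlockInc l n (σ s) then
        (∏ s, ((Equiv.Perm.sign (σ s) : ℤ) : F)) *
          ∏ k : Fin n, B fun s => blkSet l n (σ s) k
      else 0

/-- The hyperhafnian `Hf^[l,m]` (same sum as the hyperpfaffian, without signs). -/
def hyperhf (l n : ℕ) {ι : Type*} [Fintype ι]
    (B : (ι → Finset (Fin (l * n))) → F) : F :=
  (n.factorial : F)⁻¹ *
    ∑ σ : ι → Equiv.Perm (Fin (l * n)),
      if ∀ s, BlockInc l n (σ s) then
        ∏ k : Fin n, B fun s => blkSet l n (σ s) k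
      else 0

lemma sum_dite_pi {ι X F : Type*} [AddCommMonoid F]
    (p : X → Prop) [Fintype (ι → X)]
    [Fintype (ι → Subtype p)] [∀ f : ι → X, Decidable (∀ s, p (f s))]
    (g : (f : ι → X) → (∀ s, p (f s)) → F) :
    ∑ f : ι → X, (if h : ∀ s, p (f s) then g f h else 0)
      = ∑ f : ι → Subtype p, g (fun s => f s) (fun s => (f s).2) := by
  symm
  rw [← Finset.sum_filter_add_sum_filter_not univ (fun f : ι → X => ∀ s, p (f s))]
  rw [Finset.sum_eq_zero (s := univ.filter (fun f : ι → X => ¬ ∀ s, p (f s))), add_zero]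
  · refine Finset.sum_bij' (i := fun f _ => fun s => (f s : X))
      (j := fun f hf => fun s => ⟨f s, (Finset.mem_filter.1 hf).2 s⟩) ?_ ?_ ?_ ?_ ?_
    · intro a _; simp only [mem_filter, mem_univ, true_and]; exact fun s => (a s).2
    · intros; simp
    · intros; rfl
    · intros; rfl
    · intro a _; rw [dif_pos (fun s => (a s).2)]
  · intro f hf
    rw [dif_neg (Finset.mem_filter.1 hf).2]

lemma sum_ite_pi {ι X F : Type*} [AddCommMonoid F]
    (p : X → Prop) [Fintype (ι → X)]
    [Fintype (ι → Subtype p)] [∀ f : ι → X, Decidable (∀ s, p (f s))]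
    (g : (f : ι → X) → F) :
    ∑ f : ι → X, (if ∀ s, p (f s) then g f else 0)
      = ∑ f : ι → Subtype p, g (fun s => f s) :=
  sum_dite_pi p (fun f _ => g f)

/-- sign as a field element -/
def sg {F : Type*} [Field F] {n : ℕ} (σ : Perm (Fin n)) : F := ((Equiv.Perm.sign σ : ℤ) : F)

lemma sg_mul {F : Type*} [Field F] {n : ℕ} (σ τ : Perm (Fin n)) :
    (sg (σ * τ) : F) = sg σ * sg τ := by simp [sg]

lemma sg_sq {F : Type*} [Field F] {n : ℕ} (σ : Perm (Fin n)) :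
    (sg σ : F) * sg σ = 1 := by
  rcases Int.units_eq_one_or (Equiv.Perm.sign σ) with h | h <;> simp [sg, h]

lemma sg_inv {F : Type*} [Field F] {n : ℕ} (σ : Perm (Fin n)) :
    (sg σ⁻¹ : F) = sg σ := by simp [sg]

lemma sg_pow_even {F : Type*} [Field F] {n q : ℕ} (hq : Even q) (σ : Perm (Fin n)) :
    (sg σ : F) ^ q = 1 := by
  obtain ⟨k, rfl⟩ := hq
  rw [pow_add, ← mul_pow, sg_sq, one_pow]

lemma sg_pow_odd {F : Type*} [Field F] {n q : ℕ} (hq : Even (q+1)) (σ : Perm (Fin n)) :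
    (sg σ : F) ^ q = sg σ := by
  have h := sg_pow_even (F := F) hq σ
  rw [pow_succ] at h
  calc (sg σ : F) ^ q = sg σ ^ q * (sg σ * sg σ) := by rw [sg_sq, mul_one]
    _ = sg σ := by rw [← mul_assoc, h, one_mul]

/-- hyperdeterminant with the last permutation equal to one -/
def DD {F : Type*} [Field F] {q L : ℕ} {X : Type*} (h : (Fin q → Fin L) → X → F) (f : Fin L → X) : F :=
  ∑ σ : Fin q → Perm (Fin L), (∏ k, sg (σ k)) * ∏ i, h (fun k => σ k i) (f i)

lemma hyperdet_eq {F : Type*} [Field F] {q L : ℕ} {X : Type*} (hq : Even (q+1))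
    (h : (Fin q → Fin L) → X → F) (f : Fin L → X) :
    hyperdet (q+1) L (fun a => h (fun k => a k.castSucc) (f (a (Fin.last q)))) = DD h f := by
  unfold hyperdet DD
  rw [← Finset.sum_filter]
  refine Finset.sum_bij' (i := fun σ _ => fun k => σ k.castSucc * (σ (Fin.last q))⁻¹)
    (j := fun τ _ => fun k => Fin.snoc (α := fun _ => Perm (Fin L)) τ 1 k *
      (Fin.snoc (α := fun _ => Perm (Fin L)) τ 1 0)⁻¹) ?_ ?_ ?_ ?_ ?_
  · intros; simp
  · intro τ _
    simp only [mem_filter, mem_univ, true_and]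
    intro k hk
    have : k = 0 := Fin.ext hk
    subst this; simp
  · intro σ hσ
    have h0 : σ 0 = 1 := (Finset.mem_filter.1 hσ).2 0 rfl
    have key : ∀ k, Fin.snoc (α := fun _ => Perm (Fin L))
        (fun k => σ k.castSucc * (σ (Fin.last q))⁻¹) 1 k = σ k * (σ (Fin.last q))⁻¹ := by
      intro k
      refine Fin.lastCases ?_ ?_ k
      · simp
      · intro i; simp
    funext k
    simp only [key, h0]; simp
  · intro τ _
    funext k; simp
  · intro σ hσ
    have e1 : (∏ k, ((Equiv.Perm.sign (σ k) : ℤ) : F))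
        = ∏ k : Fin q, sg (σ k.castSucc * (σ (Fin.last q))⁻¹) := by
      simp only [sg_mul, sg_inv, Finset.prod_mul_distrib, Finset.prod_const, Finset.card_univ,
        Fintype.card_fin, sg_pow_odd hq]
      rw [Fin.prod_univ_castSucc]; rfl
    rw [e1]; congr 1
    refine Fintype.prod_equiv (σ (Fin.last q)) _ _ ?_
    intro i; simp

lemma DD_perm {F : Type*} [Field F] {q L : ℕ} {X : Type*} (hq : Even (q+1))
    (h : (Fin q → Fin L) → X → F) (f : Fin L → X) (τ : Perm (Fin L)) :
    DD h (fun i => f (τ i)) = sg τ * DD h f := by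
  unfold DD
  rw [Finset.mul_sum]
  refine Fintype.sum_equiv (Equiv.piCongrRight fun _ => Equiv.mulRight τ⁻¹) _ _ ?_
  intro σ
  have e1 : (∏ k, (sg (σ k) : F)) = sg τ * ∏ k, sg (σ k * τ⁻¹) := by
    simp only [sg_mul, sg_inv, Finset.prod_mul_distrib, Finset.prod_const, Finset.card_univ,
        Fintype.card_fin, sg_pow_odd hq]
    rw [mul_comm, mul_assoc, sg_sq, mul_one]
  rw [e1, mul_assoc]; congr 2
  refine Fintype.prod_equiv τ _ _ ?_
  intro i; simp

lemma DD_noninj {F : Type*} [Field F] [CharZero F] {q L : ℕ} {X : Type*} (hq : Even (q+1))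
    (h : (Fin q → Fin L) → X → F) (f : Fin L → X) (hf : ¬ Function.Injective f) :
    DD h f = 0 := by
  simp only [Function.Injective, not_forall] at hf
  obtain ⟨a, b, hab, hne⟩ := hf
  have h1 := DD_perm hq h f (Equiv.swap a b)
  have h2 : (fun i => f (Equiv.swap a b i)) = f := by
    funext i
    rw [Equiv.swap_apply_def]; split_ifs with h h' <;> simp_all
  rw [h2] at h1
  have h3 : (sg (Equiv.swap a b) : F) = -1 := by simp [sg, Equiv.Perm.sign_swap hne]
  rw [h3] at h1
  have : (2:F) * DD h f = 0 := by linear_combination h1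
  simpa using this

lemma blk_bij (l n : ℕ) : Function.Bijective (fun x : Fin n × Fin l => blk l n x.1 x.2) := by
  rw [Fintype.bijective_iff_injective_and_card]
  constructor
  · rintro ⟨j, i⟩ ⟨j', i'⟩ h
    have h' : j.1 * l + i.1 = j'.1 * l + i'.1 := by simpa [blk] using h
    have hi := i.2
    have hi' := i'.2
    have hl : 0 < l := by omega
    have a1 : (j.1 * l + i.1) / l = j.1 := by
      rw [mul_comm, Nat.mul_add_div hl, Nat.div_eq_of_lt hi, add_zero]
    have a2 : (j'.1 * l + i'.1) / l = j'.1 := by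
      rw [mul_comm, Nat.mul_add_div hl, Nat.div_eq_of_lt hi', add_zero]
    have hj : j.1 = j'.1 := by rw [← a1, ← a2, h']
    have hj' : j = j' := Fin.ext hj
    subst hj'
    have : i = i' := Fin.ext (by omega)
    rw [this]
  · simp [mul_comm]

/-- blocks as an equivalence -/
def eB (l n : ℕ) : Fin n × Fin l ≃ Fin (l * n) := Equiv.ofBijective _ (blk_bij l n)

@[simp] lemma eB_apply (l n : ℕ) (j : Fin n) (i : Fin l) : eB l n (j, i) = blk l n j i := rfl

@[simp] lemma eB_symm_blk (l n : ℕ) (j : Fin n) (i : Fin l) :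
    (eB l n).symm (blk l n j i) = (j, i) := by
  rw [← eB_apply, Equiv.symm_apply_apply]

lemma prod_blk {F : Type*} [CommMonoid F] (l n : ℕ) (g : Fin (l * n) → F) :
    ∏ x, g x = ∏ j, ∏ i, g (blk l n j i) := by
  rw [← Fintype.prod_prod_type']
  exact (Fintype.prod_equiv (eB l n) _ _ (fun x => rfl)).symm

/-- permutation acting inside the blocks -/
def bP (l n : ℕ) (α : Fin n → Perm (Fin l)) : Perm (Fin (l * n)) :=
  (eB l n).permCongr (Equiv.prodCongrRight α)

@[simp] lemma bP_blk (l n : ℕ) (α : Fin n → Perm (Fin l)) (j : Fin n) (i : Fin l) :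
    bP l n α (blk l n j i) = blk l n j (α j i) := by
  simp [bP, Equiv.permCongr_apply]

lemma sg_bP {F : Type*} [Field F] (l n : ℕ) (α : Fin n → Perm (Fin l)) :
    (sg (bP l n α) : F) = ∏ j, sg (α j) := by
  unfold sg bP
  rw [Equiv.Perm.sign_permCongr, Equiv.Perm.sign_prodCongrRight]
  simp

lemma ext_blk {l n : ℕ} {X : Type*} {f g : Fin (l * n) → X}
    (h : ∀ j i, f (blk l n j i) = g (blk l n j i)) : f = g := by
  funext x
  obtain ⟨⟨j, i⟩, rfl⟩ := (eB l n).surjective x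
  exact h j i

lemma e2_bij (l n : ℕ) : Function.Bijective
    (fun x : {ρ : Perm (Fin (l * n)) // BlockInc l n ρ} × (Fin n → Perm (Fin l)) =>
      (x.1 : Perm (Fin (l * n))) * bP l n x.2) := by
  constructor
  · rintro ⟨⟨ρ, hρ⟩, α⟩ ⟨⟨ρ', hρ'⟩, α'⟩ h
    have h1 : ∀ j i, ρ (blk l n j (α j i)) = ρ' (blk l n j (α' j i)) := by
      intro j i
      have := congrArg (fun p : Perm (Fin (l * n)) => p (blk l n j i)) h
      simpa using this
    have h2 : ∀ j, (fun i => ρ (blk l n j i)) = (fun i => ρ' (blk l n j i)) := by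
      intro j
      refine (StrictMono.range_inj (hρ j) (hρ' j)).1 ?_
      have a1 := (α j).surjective.range_comp (fun i => ρ (blk l n j i))
      have a2 := (α' j).surjective.range_comp (fun i => ρ' (blk l n j i))
      rw [← a1, ← a2]
      congr 1
      funext i; exact h1 j i
    have h3 : ρ = ρ' := by
      apply DFunLike.coe_injective
      exact ext_blk (fun j i => congrFun (h2 j) i)
    subst h3
    have h4 : α = α' := by
      funext j; ext1 i
      exact (hρ j).injective (h1 j i)
    rw [h4]
  · intro σ
    refine ⟨⟨⟨σ * bP l n (fun j => Tuple.sort (fun i => σ (blk l n j i))), ?_⟩,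
      fun j => (Tuple.sort (fun i => σ (blk l n j i)))⁻¹⟩, ?_⟩
    · intro j
      have hm := Tuple.monotone_sort (fun i => σ (blk l n j i))
      have : (fun i => (σ * bP l n (fun j => Tuple.sort (fun i => σ (blk l n j i)))) (blk l n j i))
        = (fun i => σ (blk l n j i)) ∘ Tuple.sort (fun i => σ (blk l n j i)) := by
        funext i; simp
      rw [this]
      refine hm.strictMono_of_injective ?_
      refine Function.Injective.comp ?_ (Equiv.injective _)
      intro a b hab
      have := (eB l n).injective (a₁ := (j, a)) (a₂ := (j, b)) (σ.injective hab)
      simpa using this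
    · apply DFunLike.coe_injective
      apply ext_blk
      intro j i
      simp

lemma DD_expand {F : Type*} [Field F] {q l n : ℕ} {X : Type*}
    (h : (Fin q → Fin (l * n)) → X → F) (f : Fin (l * n) → X) :
    DD h f = ∑ ρ : Fin q → {ρ : Perm (Fin (l * n)) // BlockInc l n ρ},
      (∏ k, sg (ρ k : Perm (Fin (l * n)))) * ∏ j : Fin n,
        DD (fun a => h (fun k => (ρ k : Perm (Fin (l * n))) (blk l n j (a k))))
          (fun i => f (blk l n j i)) := by
  unfold DD
  simp only [Finset.prod_univ_sum, Fintype.piFinset_univ, Finset.mul_sum]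
  rw [← Fintype.sum_prod_type'
    (f := fun (ρ : Fin q → {ρ : Perm (Fin (l * n)) // BlockInc l n ρ})
      (α : Fin n → Fin q → Perm (Fin l)) => (∏ k, (sg (ρ k : Perm (Fin (l * n))) : F)) * ∏ j : Fin n,
      ((∏ k, sg (α j k)) * ∏ i, h (fun k => (ρ k : Perm (Fin (l * n))) (blk l n j (α j k i)))
        (f (blk l n j i))))]
  symm
  refine Fintype.sum_equiv
    (((Equiv.refl _).prodCongr (Equiv.piComm _)).trans
      ((Equiv.arrowProdEquivProdArrow _ _ _).symm.trans
      (Equiv.piCongrRight fun _ => Equiv.ofBijective _ (e2_bij l n)))) _ _ ?_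
  rintro ⟨ρ, α⟩
  rw [prod_blk]
  simp only [Equiv.trans_apply, Equiv.piCongrRight_apply, Equiv.ofBijective_apply, Pi.map_apply,
    sg_mul, sg_bP, Finset.prod_mul_distrib, Equiv.prodCongr_apply, Prod.map,
    Equiv.arrowProdEquivProdArrow, Equiv.coe_fn_symm_mk, Equiv.piComm_apply, Equiv.Perm.mul_apply,
    bP_blk, Equiv.refl_apply]
  rw [mul_assoc]
  congr 2
  exact Finset.prod_comm

/-- blockwise increasing functions -/
def BI (l n N : ℕ) (f : Fin (l * n) → Fin N) : Prop :=
  ∀ j : Fin n, StrictMono fun i : Fin l => f (blk l n j i)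

/-- a function from a family of blocks -/
def e3 (l n N : ℕ) (κ : Fin n → {K : Finset (Fin N) // K.card = l}) :
    {f : Fin (l * n) → Fin N // BI l n N f} :=
  ⟨fun x => (κ ((eB l n).symm x).1).1.orderEmbOfFin (κ ((eB l n).symm x).1).2 ((eB l n).symm x).2, by
    intro j
    simp only [eB_symm_blk]
    exact ((κ j).1.orderEmbOfFin (κ j).2).strictMono⟩

lemma e3_blk (l n N : ℕ) (κ : Fin n → {K : Finset (Fin N) // K.card = l}) (j : Fin n) (i : Fin l) :
    (e3 l n N κ).1 (blk l n j i) = (κ j).1.orderEmbOfFin (κ j).2 i := by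
  simp [e3]

lemma e3_image (l n N : ℕ) (κ : Fin n → {K : Finset (Fin N) // K.card = l}) (j : Fin n) :
    univ.image (fun i => (e3 l n N κ).1 (blk l n j i)) = (κ j).1 := by
  simp only [e3_blk]
  ext x
  simp

lemma e3_bij (l n N : ℕ) : Function.Bijective (e3 l n N) := by
  constructor
  · intro κ κ' h
    funext j
    apply Subtype.ext
    rw [← e3_image, ← e3_image, h]
  · rintro ⟨f, hf⟩
    have hc : ∀ j, (univ.image (fun i => f (blk l n j i))).card = l := by
      intro j
      rw [Finset.card_image_of_injective _ (hf j).injective]; simp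
    refine ⟨fun j => ⟨univ.image (fun i => f (blk l n j i)), hc j⟩, ?_⟩
    apply Subtype.ext
    apply ext_blk
    intro j i
    rw [e3_blk]
    have := Finset.orderEmbOfFin_unique (hc j) (f := fun i => f (blk l n j i)) (by intro x; simp) (hf j)
    exact (congrFun this i).symm

/-- a set and a permutation give an injection -/
def e1 (l n N : ℕ) (x : {P : Finset (Fin N) // P.card = l * n} ×
      {ρ : Perm (Fin (l * n)) // BlockInc l n ρ}) :
    {f : {f : Fin (l * n) → Fin N // BI l n N f} // Function.Injective f.1} :=
  ⟨⟨fun i => x.1.1.orderEmbOfFin x.1.2 (x.2.1 i), fun j =>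
    (OrderEmbedding.strictMono _).comp (x.2.2 j)⟩,
    (RelEmbedding.injective _).comp (Equiv.injective _)⟩

lemma e1_bij (l n N : ℕ) : Function.Bijective (e1 l n N) := by
  constructor
  · rintro ⟨⟨P, hP⟩, ⟨ρ, hρ⟩⟩ ⟨⟨P', hP'⟩, ⟨ρ', hρ'⟩⟩ h
    have h1 : ∀ i, P.orderEmbOfFin hP (ρ i) = P'.orderEmbOfFin hP' (ρ' i) := by
      intro i
      have := congrArg (fun f => f.1.1 i) h
      exact this
    have h2 : P = P' := by
      apply Finset.coe_injective
      rw [← Finset.range_orderEmbOfFin P hP, ← Finset.range_orderEmbOfFin P' hP']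
      rw [← ρ.surjective.range_comp, ← ρ'.surjective.range_comp (P'.orderEmbOfFin hP')]
      congr 1
      funext i; exact h1 i
    subst h2
    have h3 : ρ = ρ' := by
      ext1 i
      exact (P.orderEmbOfFin hP).injective (h1 i)
    subst h3
    rfl
  · rintro ⟨⟨f, hf⟩, hi⟩
    have hi' : Function.Injective f := hi
    have hc : (univ.image f).card = l * n := by
      rw [Finset.card_image_of_injective _ hi']; simp
    have hmem : ∀ i, ∃ x, (univ.image f).orderEmbOfFin hc x = f i := by
      intro i
      have : f i ∈ Set.range ((univ.image f).orderEmbOfFin hc) := by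
        rw [Finset.range_orderEmbOfFin]; simp
      exact this
    choose ρ hρ using hmem
    have hρi : Function.Injective ρ := by
      intro a b hab
      apply hi'
      rw [← hρ, ← hρ, hab]
    refine ⟨⟨⟨univ.image f, hc⟩, ⟨Equiv.ofBijective ρ (Finite.injective_iff_bijective.1 hρi), ?_⟩⟩, ?_⟩
    · intro j a b hab
      have := hf j hab
      simp only [← hρ] at this
      simpa using this
    · apply Subtype.ext
      apply Subtype.ext
      funext i
      exact hρ i

lemma hyperpf_eq {F : Type*} [Field F] (l n : ℕ) {ι : Type*} [Fintype ι]
    [Fintype (ι → {ρ : Perm (Fin (l * n)) // BlockInc l n ρ})]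
    (B : (ι → Finset (Fin (l * n))) → F) :
    hyperpf l n B = (n.factorial : F)⁻¹ *
      ∑ ρ : ι → {ρ : Perm (Fin (l * n)) // BlockInc l n ρ},
        (∏ s, sg (ρ s).1) * ∏ k : Fin n, B fun s => blkSet l n (ρ s).1 k := by
  unfold hyperpf
  congr 1
  exact sum_ite_pi (BlockInc l n) (fun σ => (∏ s, ((Equiv.Perm.sign (σ s) : ℤ) : F)) *
          ∏ k : Fin n, B fun s => blkSet l n (σ s) k)

/-- common summand -/
def GG {F : Type*} [Field F] {l q r n N : ℕ}
    (H : Fin r → (Fin q → Fin (l * n)) → Fin N → F) (A : (Fin r → Finset (Fin N)) → F)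
    (f : Fin r → {f : Fin (l * n) → Fin N // BI l n N f}) : F :=
  (∏ j : Fin n, A fun s => univ.image (fun i => (f s).1 (blk l n j i))) * ∏ s, DD (H s) (f s).1

lemma lhs_term {F : Type*} [Field F] {l q r n N : ℕ} (hm : Even (q + 1))
    (H : Fin r → (Fin q → Fin (l * n)) → Fin N → F) (A : (Fin r → Finset (Fin N)) → F)
    (P : Fin r → {P : Finset (Fin N) // P.card = l * n}) :
    hyperpf l n (fun I : Fin r → Finset (Fin (l * n)) =>
        A fun s => (I s).map ((P s).1.orderEmbOfFin (P s).2).toEmbedding) *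
      ∏ s : Fin r, hyperdet (q + 1) (l * n) (fun a : Fin (q + 1) → Fin (l * n) =>
          H s (fun k => a k.castSucc) ((P s).1.orderEmbOfFin (P s).2 (a (Fin.last q))))
    = (n.factorial : F)⁻¹ * ∑ τ : Fin r → {ρ : Perm (Fin (l * n)) // BlockInc l n ρ},
        GG H A (fun s => (e1 l n N (P s, τ s)).1) := by
  have h1 : ∀ s, hyperdet (q + 1) (l * n) (fun a : Fin (q + 1) → Fin (l * n) =>
          H s (fun k => a k.castSucc) ((P s).1.orderEmbOfFin (P s).2 (a (Fin.last q))))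
      = DD (H s) ((P s).1.orderEmbOfFin (P s).2) := fun s => hyperdet_eq hm (H s) _
  simp only [h1]
  rw [hyperpf_eq, mul_assoc, Finset.sum_mul]
  congr 1
  refine Finset.sum_congr rfl fun τ _ => ?_
  unfold GG
  have h2 : ∀ s, DD (H s) (e1 l n N (P s, τ s)).1.1
      = sg (τ s).1 * DD (H s) ((P s).1.orderEmbOfFin (P s).2) := fun s =>
    DD_perm hm (H s) ((P s).1.orderEmbOfFin (P s).2) (τ s).1
  simp only [h2, Finset.prod_mul_distrib]
  have h3 : ∀ (j : Fin n) (s : Fin r), (blkSet l n (τ s).1 j).map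
        ((P s).1.orderEmbOfFin (P s).2).toEmbedding
      = univ.image (fun i => (e1 l n N (P s, τ s)).1.1 (blk l n j i)) := by
    intro j s
    ext x
    simp [blkSet, e1]
  simp only [h3]
  ring

lemma lhs_sum {F : Type*} [Field F] [CharZero F] {l q r n N : ℕ} (hm : Even (q + 1))
    (H : Fin r → (Fin q → Fin (l * n)) → Fin N → F) (A : (Fin r → Finset (Fin N)) → F) :
    ∑ P : Fin r → {P : Finset (Fin N) // P.card = l * n},
      ∑ τ : Fin r → {ρ : Perm (Fin (l * n)) // BlockInc l n ρ},
        GG H A (fun s => (e1 l n N (P s, τ s)).1)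
    = ∑ f, GG H A f := by
  rw [← Fintype.sum_prod_type'
    (f := fun (P : Fin r → {P : Finset (Fin N) // P.card = l * n})
      (τ : Fin r → {ρ : Perm (Fin (l * n)) // BlockInc l n ρ}) =>
        GG H A (fun s => (e1 l n N (P s, τ s)).1))]
  refine (Fintype.sum_equiv ((Equiv.arrowProdEquivProdArrow _ _ _).symm.trans
      (Equiv.piCongrRight fun _ => Equiv.ofBijective _ (e1_bij l n N))) _
      (fun f => GG H A (fun s => (f s).1)) (fun x => rfl)).trans ?_
  rw [← sum_ite_pi (fun f : {f : Fin (l * n) → Fin N // BI l n N f} => Function.Injective f.1)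
    (fun f => GG H A f)]
  refine Finset.sum_congr rfl fun f _ => ?_
  split_ifs with h
  · rfl
  · rw [not_forall] at h
    obtain ⟨s, hs⟩ := h
    unfold GG
    rw [Finset.prod_eq_zero (mem_univ s) (DD_noninj hm (H s) _ hs), mul_zero]

lemma blkSet_card {l n : ℕ} (ρ : Perm (Fin (l * n))) (hρ : BlockInc l n ρ) (j : Fin n) :
    (blkSet l n ρ j).card = l := by
  unfold blkSet
  rw [Finset.card_image_of_injective _ (hρ j).injective]; simp

lemma blkSet_emb {l n : ℕ} (ρ : Perm (Fin (l * n))) (hρ : BlockInc l n ρ) (j : Fin n)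
    (h : (blkSet l n ρ j).card = l) (i : Fin l) :
    (blkSet l n ρ j).orderEmbOfFin h i = ρ (blk l n j i) := by
  have := Finset.orderEmbOfFin_unique h (f := fun i => ρ (blk l n j i))
    (by intro x; simp [blkSet]) (hρ j)
  exact (congrFun this i).symm

lemma rhs_sum {F : Type*} [Field F] {l q r n N : ℕ} 
    (H : Fin r → (Fin q → Fin (l * n)) → Fin N → F) (A : (Fin r → Finset (Fin N)) → F) :
    ∑ ρ : Fin r × Fin q → {ρ : Perm (Fin (l * n)) // BlockInc l n ρ},
      (∏ p, (sg (ρ p).1 : F)) * ∏ j : Fin n,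
        ∑ K : Fin r → {K : Finset (Fin N) // K.card = l}, A (fun s => (K s).1) *
          ∏ s, DD (fun a => H s (fun k => (ρ (s, k)).1 (blk l n j (a k))))
            ((K s).1.orderEmbOfFin (K s).2)
    = ∑ f, GG H A f := by
  simp only [Finset.prod_univ_sum, Fintype.piFinset_univ, Finset.mul_sum]
  rw [Finset.sum_comm]
  refine Fintype.sum_equiv ((Equiv.piComm _).trans
      (Equiv.piCongrRight fun _ => Equiv.ofBijective _ (e3_bij l n N))) _ _ ?_
  intro K
  have hf : ((Equiv.piComm _).trans
      (Equiv.piCongrRight fun _ => Equiv.ofBijective _ (e3_bij l n N))) K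
      = fun s => e3 l n N (fun j => K j s) := rfl
  rw [hf]
  unfold GG
  simp only [e3_image]
  simp only [DD_expand, e3_blk]
  rw [Finset.prod_univ_sum, Fintype.piFinset_univ, Finset.mul_sum]
  refine Fintype.sum_equiv (Equiv.curry _ _ _) _ _ ?_
  intro ρ
  simp only [Finset.prod_mul_distrib, Fintype.prod_prod_type, Equiv.curry_apply, Function.curry]
  rw [Finset.prod_comm (s := (univ : Finset (Fin n)))]
  ring

/-- General hyperpfaffian minor summation formula (here `m = q+1`). -/
theorem hyperpf_minor_summation (l q r n N : ℕ) (hl : Even l) (hl0 : 0 < l)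
    (hm : Even (q + 1)) (hr : 0 < r) (hn : 0 < n) (hN : l * n ≤ N)
    (H : Fin r → (Fin q → Fin (l * n)) → Fin N → F)
    (A : (Fin r → Finset (Fin N)) → F)
    (Q : (Fin r × Fin q → Finset (Fin (l * n))) → F)
    (hQ : ∀ Iv : Fin r × Fin q → Finset (Fin (l * n)),
      ∀ hIv : ∀ p, (Iv p).card = l,
      Q Iv = ∑ K : Fin r → Finset (Fin N),
        if hK : ∀ s, (K s).card = l then
          A K * ∏ s : Fin r,
            hyperdet (q + 1) l (fun a : Fin (q + 1) → Fin l =>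
              H s (fun k : Fin q => (Iv (s, k)).orderEmbOfFin (hIv (s, k)) (a k.castSucc))
                ((K s).orderEmbOfFin (hK s) (a (Fin.last q))))
        else 0) :
    (∑ P : Fin r → Finset (Fin N),
        if hP : ∀ s, (P s).card = l * n then
          hyperpf l n (fun I : Fin r → Finset (Fin (l * n)) =>
              A fun s => (I s).map ((P s).orderEmbOfFin (hP s)).toEmbedding) *
            ∏ s : Fin r,
              hyperdet (q + 1) (l * n) (fun a : Fin (q + 1) → Fin (l * n) =>
                H s (fun k => a k.castSucc) ((P s).orderEmbOfFin (hP s) (a (Fin.last q))))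
        else 0)
    = hyperpf l n Q := by
  have hL := sum_dite_pi (ι := Fin r) (fun P : Finset (Fin N) => P.card = l * n)
    (fun P hP => hyperpf l n (fun I : Fin r → Finset (Fin (l * n)) =>
              A fun s => (I s).map ((P s).orderEmbOfFin (hP s)).toEmbedding) *
            ∏ s : Fin r,
              hyperdet (q + 1) (l * n) (fun a : Fin (q + 1) → Fin (l * n) =>
                H s (fun k => a k.castSucc) ((P s).orderEmbOfFin (hP s) (a (Fin.last q)))))
  refine hL.trans ?_
  rw [Finset.sum_congr rfl (fun P _ => lhs_term hm H A P), ← Finset.mul_sum, lhs_sum hm,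
    ← rhs_sum, hyperpf_eq]
  congr 1
  refine Finset.sum_congr rfl fun ρ _ => ?_
  congr 1
  refine Finset.prod_congr rfl fun j _ => ?_
  rw [hQ _ (fun p => blkSet_card (ρ p).1 (ρ p).2 j)]
  rw [sum_dite_pi (ι := Fin r) (fun K : Finset (Fin N) => K.card = l)]
  refine Finset.sum_congr rfl fun K _ => ?_
  congr 1
  refine Finset.prod_congr rfl fun s _ => ?_
  rw [← hyperdet_eq hm]
  congr 1
  funext a
  congr 1
  funext k
  exact (blkSet_emb (ρ (s, k)).1 (ρ (s, k)).2 j _ _).symm
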